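/- The number of friendly 3-watermelons of length n (three non-crossing directed walks from the origin to a common endpoint in which all three walkers coincide on a vertex only at the endpoints and never all share an edge) is, for n ≥ 1, equal to g_n - 2·[n=1], where g_n is the number of irreducible super friendly 3-watermelons of length n; equivalently the counting sequence begins 1, 0, 2, 6, 24, 110, 550 for n = 0,...,6. -/

import Mathlib

/-- A directed walk of length `n`, encoded by its ordinates, frozen after time `n`. -/
def IsWalkTo (n : ℕ) (y : ℕ → ℤ) : Prop :=
  (∀ t < n, y (t + 1) = y t + 1 ∨ y (t + 1) = y t - 1) ∧ (∀ t, n ≤ t → y t = y n)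

/-- A vicious `p`-watermelon of length `n`: walks start at heights `0,2,…,2(p-1)`,
end at heights `c, c+2, …, c+2(p-1)` for some `c`, with strict ordering at every time. -/
def Vicious (p n : ℕ) (y : Fin p → ℕ → ℤ) : Prop :=
  (∀ k, IsWalkTo n (y k)) ∧
  (∀ k : Fin p, y k 0 = 2 * ((k : ℕ) : ℤ)) ∧
  (∃ c : ℤ, ∀ k : Fin p, y k n = c + 2 * ((k : ℕ) : ℤ)) ∧
  (∀ t ≤ n, ∀ j k : Fin p, j < k → y j t < y k t)

/-- A super friendly `p`-watermelon of length `n`: all walks start at the origin,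
all end at the same point, with weak ordering at every time. -/
def SuperFriendly (p n : ℕ) (y : Fin p → ℕ → ℤ) : Prop :=
  (∀ k, IsWalkTo n (y k)) ∧
  (∀ k, y k 0 = 0) ∧
  (∀ j k : Fin p, y j n = y k n) ∧
  (∀ t ≤ n, ∀ j k : Fin p, j ≤ k → y j t ≤ y k t)

/-- All `p` walkers coincide at time `t`. -/
def AllCoincide (p : ℕ) (y : Fin p → ℕ → ℤ) (t : ℕ) : Prop :=
  ∀ j k : Fin p, y j t = y k t

/-- An irreducible super friendly `p`-watermelon: positive length, walkers coincide
only at the two endpoints. -/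
def IrreducibleSFW (p n : ℕ) (y : Fin p → ℕ → ℤ) : Prop :=
  SuperFriendly p n y ∧ 0 < n ∧ ∀ t, 0 < t → t < n → ¬ AllCoincide p y t

/-- A friendly `p`-watermelon: non-crossing walkers from the origin to a common
endpoint, all coinciding on a vertex only at the endpoints, and never all sharing
an edge. -/
def FriendlyWM (p n : ℕ) (y : Fin p → ℕ → ℤ) : Prop :=
  SuperFriendly p n y ∧
  (∀ t, 0 < t → t < n → ¬ AllCoincide p y t) ∧
  (∀ t < n, ¬ (AllCoincide p y t ∧ AllCoincide p y (t + 1)))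

/-- `y` is a weakly ordered triple of walks of length `n` with starting heights `x` and a common
endpoint, all of whose coincidences occur at the times `0` and `n`. -/
def IsBridge (n : ℕ) (x : Fin 3 → ℤ) (y : Fin 3 → ℕ → ℤ) : Prop :=
  (∀ k, IsWalkTo n (y k)) ∧ (∀ k, y k 0 = x k) ∧ (∀ j k, y j n = y k n) ∧
  (∀ t ≤ n, ∀ j k : Fin 3, j ≤ k → y j t ≤ y k t) ∧
  ∀ t, 0 < t → t < n → ¬ AllCoincide 3 y t

/-- The step `+1` or `-1` encoded by a Boolean. -/
def walkStep (b : Bool) : ℤ := if b then 1 else -1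

/-- Move the three walkers at heights `x` by one step each. -/
def moveBy (x : Fin 3 → ℤ) (s : Bool × Bool × Bool) : Fin 3 → ℤ :=
  ![x 0 + walkStep s.1, x 1 + walkStep s.2.1, x 2 + walkStep s.2.2]

theorem moveBy_vec (a b c : ℤ) (s : Bool × Bool × Bool) :
    moveBy ![a, b, c] s = ![a + walkStep s.1, b + walkStep s.2.1, c + walkStep s.2.2] :=
  rfl

/-- Prepend the heights `x` to a triple of walks. -/
def prependHeights (x : Fin 3 → ℤ) (z : Fin 3 → ℕ → ℤ) : Fin 3 → ℕ → ℤ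
  | k, 0 => x k
  | k, t + 1 => z k t

theorem prependHeights_eq_iff {x : Fin 3 → ℤ} {z y : Fin 3 → ℕ → ℤ} :
    prependHeights x z = y ↔ (∀ k, y k 0 = x k) ∧ z = fun k t => y k (t + 1) := by
  constructor
  · rintro rfl
    exact ⟨fun _ => rfl, rfl⟩
  · rintro ⟨h, rfl⟩
    funext k t
    cases t with
    | zero => exact (h k).symm
    | succ t => rfl

theorem prependHeights_injective (x : Fin 3 → ℤ) : Function.Injective (prependHeights x) :=
  fun _ _ h => funext fun k => funext fun t => congrFun (congrFun h k) (t + 1)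

theorem isWalkTo_succ {n : ℕ} {y : ℕ → ℤ} :
    IsWalkTo (n + 1) y ↔ (y 1 = y 0 + 1 ∨ y 1 = y 0 - 1) ∧ IsWalkTo n fun t => y (t + 1) := by
  constructor
  · rintro ⟨h1, h2⟩
    exact ⟨h1 0 (by omega), fun t ht => h1 (t + 1) (by omega), fun t ht => h2 (t + 1) (by omega)⟩
  · rintro ⟨h0, h1, h2⟩
    refine ⟨fun t ht => ?_, fun t ht => ?_⟩
    · cases t with
      | zero => exact h0
      | succ t => exact h1 t (by omega)
    · cases t with
      | zero => omega
      | succ t => exact h2 t (by omega)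

theorem exists_walkStep_iff {a b : ℤ} : (∃ s, b = a + walkStep s) ↔ b = a + 1 ∨ b = a - 1 := by
  simp [walkStep, sub_eq_add_neg, or_comm]

theorem exists_moveBy_iff {x z : Fin 3 → ℤ} :
    (∃ s, z = moveBy x s) ↔ ∀ k, z k = x k + 1 ∨ z k = x k - 1 := by
  simp only [← exists_walkStep_iff]
  constructor
  · rintro ⟨s, rfl⟩ k
    fin_cases k
    exacts [⟨_, rfl⟩, ⟨_, rfl⟩, ⟨_, rfl⟩]
  · intro h
    choose s hs using h
    refine ⟨(s 0, s 1, s 2), funext fun k => ?_⟩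
    fin_cases k
    exacts [hs 0, hs 1, hs 2]

theorem moveBy_injective (x : Fin 3 → ℤ) : Function.Injective (moveBy x) := by
  rintro ⟨a, b, c⟩ ⟨a', b', c'⟩ h
  have h0 := congrFun h 0
  have h1 := congrFun h 1
  have h2 := congrFun h 2
  revert h0 h1 h2
  cases a <;> cases a' <;> cases b <;> cases b' <;> cases c <;> cases c' <;>
    simp [moveBy, walkStep]

theorem isBridge_zero {x : Fin 3 → ℤ} {y : Fin 3 → ℕ → ℤ} :
    IsBridge 0 x y ↔ (∀ j k, x j = x k) ∧ y = fun k _ => x k := by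
  constructor
  · rintro ⟨hw, h0, he, -, -⟩
    refine ⟨fun j k => by rw [← h0, ← h0]; exact he j k, ?_⟩
    funext k t
    rw [(hw k).2 t (Nat.zero_le t), h0]
  · rintro ⟨hx, rfl⟩
    exact ⟨fun k => ⟨by simp, by simp⟩, fun _ => rfl, hx, fun _ _ j k _ => (hx j k).le, by simp⟩

theorem isBridge_succ {n : ℕ} {x : Fin 3 → ℤ} {y : Fin 3 → ℕ → ℤ} :
    IsBridge (n + 1) x y ↔ (∀ j k : Fin 3, j ≤ k → x j ≤ x k) ∧
      ∃ s, (n = 0 ∨ ¬ ∀ j k, moveBy x s j = moveBy x s k) ∧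
        ∃ z, IsBridge n (moveBy x s) z ∧ prependHeights x z = y := by
  constructor
  · rintro ⟨hw, h0, he, ho, hc⟩
    simp only [isWalkTo_succ, h0] at hw
    obtain ⟨s, hs⟩ := (exists_moveBy_iff (x := x) (z := fun k => y k 1)).2 fun k => (hw k).1
    refine ⟨fun j k h => by simpa only [h0] using ho 0 (by omega) j k h, s, ?_,
      fun k t => y k (t + 1), ⟨fun k => (hw k).2, fun k => congrFun hs k, he,
      fun t ht => ho (t + 1) (by omega), fun t h1 h2 => hc (t + 1) (by omega) (by omega)⟩,
      prependHeights_eq_iff.2 ⟨h0, rfl⟩⟩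
    rw [← hs]
    rcases Nat.eq_zero_or_pos n with h | h
    · exact Or.inl h
    · exact Or.inr (hc 1 (by omega) (by omega))
  · rintro ⟨hx, s, hn, z, ⟨hw, h0, he, ho, hc⟩, hy⟩
    obtain ⟨hy0, rfl⟩ := prependHeights_eq_iff.1 hy
    have hs : (fun k => y k 1) = moveBy x s := funext h0
    refine ⟨fun k => isWalkTo_succ.2 ⟨?_, hw k⟩, hy0, he, fun t ht => ?_, fun t h1 h2 => ?_⟩
    · rw [hy0]
      exact exists_moveBy_iff.1 ⟨s, hs⟩ k
    · cases t with
      | zero => simpa only [hy0] using hx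
      | succ t => exact ho t (by omega)
    · rcases Nat.lt_or_ge 1 t with h | h
      · obtain ⟨t, rfl⟩ := Nat.exists_eq_add_of_lt h
        have := hc (t + 1) (by omega) (by omega)
        rwa [show 1 + t + 1 = t + 1 + 1 by omega]
      · obtain rfl : t = 1 := by omega
        rw [← hs] at hn
        exact hn.resolve_left (by omega)

open Classical in
/-- The finite set of bridges of length `n` starting at the heights `x`. -/
noncomputable def bridges : ℕ → (Fin 3 → ℤ) → Finset (Fin 3 → ℕ → ℤ)
  | 0, x => if ∀ j k, x j = x k then {fun k _ => x k} else ∅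
  | n + 1, x => if ∀ j k : Fin 3, j ≤ k → x j ≤ x k then
      (Finset.univ.filter fun s => n = 0 ∨ ¬ ∀ j k, moveBy x s j = moveBy x s k).biUnion
        fun s => (bridges n (moveBy x s)).image (prependHeights x)
    else ∅

theorem mem_bridges {n : ℕ} {x : Fin 3 → ℤ} {y : Fin 3 → ℕ → ℤ} :
    y ∈ bridges n x ↔ IsBridge n x y := by
  induction n generalizing x y with
  | zero =>
    rw [isBridge_zero, bridges]
    split_ifs with h
    · rw [Finset.mem_singleton, and_iff_right h]
    · simp only [Finset.notMem_empty, h, false_and]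
  | succ n ih =>
    rw [isBridge_succ, bridges]
    split_ifs with h
    · simp only [Finset.mem_biUnion, Finset.mem_filter, Finset.mem_univ, true_and,
        Finset.mem_image, ih]
      exact (and_iff_right h).symm
    · simp only [Finset.notMem_empty, h, false_and]

/-- The number of bridges of length `n` starting at the heights `a`, `b`, `c`. -/
def bridgeCount : ℕ → ℤ → ℤ → ℤ → ℕ
  | 0, a, b, c => if a = b ∧ b = c then 1 else 0
  | n + 1, a, b, c =>
    let next (a' b' c' : ℤ) := if n = 0 ∨ ¬ (a' = b' ∧ b' = c') then bridgeCount n a' b' c' else 0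
    if a ≤ b ∧ b ≤ c then
      next (a + 1) (b + 1) (c + 1) + next (a + 1) (b + 1) (c + -1) +
      (next (a + 1) (b + -1) (c + 1) + next (a + 1) (b + -1) (c + -1)) +
      (next (a + -1) (b + 1) (c + 1) + next (a + -1) (b + 1) (c + -1) +
      (next (a + -1) (b + -1) (c + 1) + next (a + -1) (b + -1) (c + -1)))
    else 0

theorem forall_vec_eq_iff {a b c : ℤ} :
    (∀ j k : Fin 3, ![a, b, c] j = ![a, b, c] k) ↔ a = b ∧ b = c := by
  simp [Fin.forall_fin_succ]
  omega

theorem forall_vec_le_iff {a b c : ℤ} :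
    (∀ j k : Fin 3, j ≤ k → ![a, b, c] j ≤ ![a, b, c] k) ↔ a ≤ b ∧ b ≤ c := by
  constructor
  · exact fun h => ⟨h 0 1 (by decide), h 1 2 (by decide)⟩
  · rintro ⟨h1, h2⟩ j k hjk
    fin_cases j <;> fin_cases k <;> simp at hjk ⊢ <;> omega

theorem card_bridges (n : ℕ) (a b c : ℤ) :
    (bridges n ![a, b, c]).card = bridgeCount n a b c := by
  classical
  induction n generalizing a b c with
  | zero =>
    rw [bridges, bridgeCount]
    simp only [forall_vec_eq_iff]
    split_ifs <;> rfl
  | succ n ih =>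
    rw [bridges, bridgeCount]
    simp only [forall_vec_le_iff]
    by_cases h : a ≤ b ∧ b ≤ c
    · rw [if_pos h, if_pos h, Finset.card_biUnion]
      · simp only [Finset.card_image_of_injective _ (prependHeights_injective _),
          Finset.sum_filter, moveBy_vec, forall_vec_eq_iff, ih, Fintype.sum_prod_type,
          Fintype.sum_bool, walkStep, if_true, Bool.false_eq_true, if_false]
      · intro s _ s' _ hs
        rw [Function.onFun, Finset.disjoint_left]
        intro y hy hy'
        obtain ⟨z, hz, rfl⟩ := Finset.mem_image.1 hy
        obtain ⟨z', hz', h⟩ := Finset.mem_image.1 hy'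
        obtain rfl := prependHeights_injective _ h
        refine hs (moveBy_injective ![a, b, c] (funext fun k => ?_))
        rw [← (mem_bridges.1 hz).2.1 k, (mem_bridges.1 hz').2.1 k]
    · rw [if_neg h, if_neg h, Finset.card_empty]

theorem irreducibleSFW_iff_isBridge {n : ℕ} (hn : 0 < n) (y : Fin 3 → ℕ → ℤ) :
    IrreducibleSFW 3 n y ↔ IsBridge n ![0, 0, 0] y := by
  have h0 : (∀ k, y k 0 = ![(0 : ℤ), 0, 0] k) ↔ ∀ k, y k 0 = 0 := by
    simp [Fin.forall_fin_succ]
  simp only [IrreducibleSFW, SuperFriendly, IsBridge, h0, hn, true_and, and_assoc]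

theorem card_irreducibleSFW {n : ℕ} (hn : 0 < n) :
    Nat.card {y : Fin 3 → ℕ → ℤ // IrreducibleSFW 3 n y} = bridgeCount n 0 0 0 := by
  rw [← card_bridges]
  exact Nat.subtype_card _ fun y => mem_bridges.trans (irreducibleSFW_iff_isBridge hn y).symm

theorem friendlyWM_iff_irreducibleSFW {p n : ℕ} (hn : 2 ≤ n) (y : Fin p → ℕ → ℤ) :
    FriendlyWM p n y ↔ IrreducibleSFW p n y := by
  constructor
  · rintro ⟨h, hc, -⟩
    exact ⟨h, by omega, hc⟩
  · rintro ⟨h, -, hc⟩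
    refine ⟨h, hc, fun t ht ⟨h1, h2⟩ => ?_⟩
    rcases Nat.eq_zero_or_pos t with rfl | h'
    · exact hc 1 (by omega) (by omega) h2
    · exact hc t h' ht h1

theorem card_friendlyWM_eq_card_irreducibleSFW {p n : ℕ} (hn : 2 ≤ n) :
    Nat.card {y : Fin p → ℕ → ℤ // FriendlyWM p n y} =
      Nat.card {y : Fin p → ℕ → ℤ // IrreducibleSFW p n y} :=
  Nat.card_congr (Equiv.subtypeEquivRight (friendlyWM_iff_irreducibleSFW hn))

theorem card_friendlyWM_of_two_le {n : ℕ} (hn : 2 ≤ n) :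
    Nat.card {y : Fin 3 → ℕ → ℤ // FriendlyWM 3 n y} = bridgeCount n 0 0 0 := by
  rw [card_friendlyWM_eq_card_irreducibleSFW hn, card_irreducibleSFW (by omega)]

theorem card_friendlyWM_one (p : ℕ) :
    Nat.card {y : Fin p → ℕ → ℤ // FriendlyWM p 1 y} = 0 := by
  have : IsEmpty {y : Fin p → ℕ → ℤ // FriendlyWM p 1 y} :=
    ⟨fun ⟨_, ⟨_, h0, h1, _⟩, _, h⟩ =>
      h 0 one_pos ⟨fun j k => (h0 j).trans (h0 k).symm, h1⟩⟩
  exact Nat.card_of_isEmpty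

theorem friendlyWM_zero_iff {p : ℕ} (y : Fin p → ℕ → ℤ) : FriendlyWM p 0 y ↔ y = 0 := by
  constructor
  · rintro ⟨⟨hw, h0, -, -⟩, -, -⟩
    funext k t
    rw [(hw k).2 t (Nat.zero_le t), h0]
    rfl
  · rintro rfl
    simp [FriendlyWM, SuperFriendly, IsWalkTo]

theorem card_friendlyWM_zero (p : ℕ) :
    Nat.card {y : Fin p → ℕ → ℤ // FriendlyWM p 0 y} = 1 := by
  simp [friendlyWM_zero_iff]

/-- For `n ≥ 1` the number of friendly 3-watermelons of length `n` equals
`g_n - 2·[n = 1]` where `g_n` counts irreducible super friendly 3-watermelons;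
the counting sequence begins `1, 0, 2, 6, 24, 110, 550`. -/
theorem friendly3_counts :
    (∀ n : ℕ, 1 ≤ n →
      (Nat.card {y : Fin 3 → ℕ → ℤ // FriendlyWM 3 n y} : ℤ) =
        (Nat.card {y : Fin 3 → ℕ → ℤ // IrreducibleSFW 3 n y} : ℤ) -
          (if n = 1 then 2 else 0)) ∧
    Nat.card {y : Fin 3 → ℕ → ℤ // FriendlyWM 3 0 y} = 1 ∧
    Nat.card {y : Fin 3 → ℕ → ℤ // FriendlyWM 3 1 y} = 0 ∧
    Nat.card {y : Fin 3 → ℕ → ℤ // FriendlyWM 3 2 y} = 2 ∧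
    Nat.card {y : Fin 3 → ℕ → ℤ // FriendlyWM 3 3 y} = 6 ∧
    Nat.card {y : Fin 3 → ℕ → ℤ // FriendlyWM 3 4 y} = 24 ∧
    Nat.card {y : Fin 3 → ℕ → ℤ // FriendlyWM 3 5 y} = 110 ∧
    Nat.card {y : Fin 3 → ℕ → ℤ // FriendlyWM 3 6 y} = 550 := by
  refine ⟨fun n hn => ?_, card_friendlyWM_zero 3, card_friendlyWM_one 3, ?_, ?_, ?_, ?_, ?_⟩
  · rcases hn.eq_or_lt with rfl | hn
    · rw [card_friendlyWM_one, card_irreducibleSFW one_pos]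
      decide
    · rw [card_friendlyWM_eq_card_irreducibleSFW hn, if_neg (by omega), sub_zero]
  all_goals
    rw [card_friendlyWM_of_two_le (by norm_num)]
    decide +kernel
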